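/- Construction II, second graph. Let D₂ be the directed graph on the vertex set V = {(g, B) : g ∈ P, B ∈ 𝓑_g}, with adjacency (g, B) → (g′, B′) if and only if either g ∈ B′, or g = g′ and B ≠ B′. Then D₂ is a directed strongly regular graph with parameters (v, k, t, λ, μ) = (ns, ls + s − 1, ld + s − 1, ld + s − 2, (l+1)d). -/

import Mathlib

/-- A loopless directed graph (given by its adjacency relation `Adj` on the vertex
type `V`) is a *directed strongly regular graph* with parameters `(v, k, t, lam, mu)`:
the vertex set is finite of size `v`; every vertex has exactly `k` out-neighbors and
exactly `k` in-neighbors; every vertex has exactly `t` out-neighbors that are also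
in-neighbors; and for distinct vertices `x, y`, the number of directed paths of
length two from `x` to `y` is `lam` if `x → y` and `mu` otherwise. -/
def IsDSRG {V : Type} (Adj : V → V → Prop) (v k t lam mu : ℕ) : Prop :=
  Finite V ∧
  (∀ x : V, ¬ Adj x x) ∧
  Nat.card V = v ∧
  (∀ x : V, Nat.card {y : V // Adj x y} = k) ∧
  (∀ x : V, Nat.card {y : V // Adj y x} = k) ∧
  (∀ x : V, Nat.card {y : V // Adj x y ∧ Adj y x} = t) ∧
  (∀ x y : V, x ≠ y → Adj x y → Nat.card {z : V // Adj x z ∧ Adj z y} = lam) ∧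
  (∀ x y : V, x ≠ y → ¬ Adj x y → Nat.card {z : V // Adj x z ∧ Adj z y} = mu)

open Finset

/-- The pairs `(h, C)` with `C ∈ 𝓑 h` satisfying a predicate can be counted fibrewise over `h`. -/
lemma natCard_flag_subtype {α : Type} [Fintype α] [DecidableEq α] (𝓑 : α → Finset (Finset α))
    (q : α → Finset α → Prop) [∀ h, DecidablePred (q h)] :
    Nat.card {z : {x : α × Finset α // x.2 ∈ 𝓑 x.1} // q z.1.1 z.1.2} =
      ∑ h, #{C ∈ 𝓑 h | q h C} := by
  let e : {z : {x : α × Finset α // x.2 ∈ 𝓑 x.1} // q z.1.1 z.1.2} ≃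
      (Σ h : α, {C // C ∈ {C ∈ 𝓑 h | q h C}}) :=
    { toFun := fun z => ⟨z.1.1.1, z.1.1.2, mem_filter.2 ⟨z.1.2, z.2⟩⟩
      invFun := fun w => ⟨⟨(w.1, w.2.1), (mem_filter.1 w.2.2).1⟩, (mem_filter.1 w.2.2).2⟩
      left_inv := fun _ => rfl
      right_inv := fun _ => rfl }
  rw [Nat.card_congr e, Nat.card_eq_fintype_card, Fintype.card_sigma]
  exact Fintype.sum_congr _ _ fun h => Fintype.card_coe _

/-- **Construction II, second graph `D₂`.**  Let `n, d, l, s` be positive integers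
with `d(n−1) = ls`.  The point set `P` is the finite type `α` with `n` elements;
for each `i ∈ P`, `𝓑 i` is a family of `s` distinct blocks, each an `l`-element
subset of `P \ {i}`, such that every point of `P \ {i}` lies in exactly `d` blocks
of `𝓑 i`.  The vertices are the pairs `(g, B)` with `B ∈ 𝓑 g`, and
`(g,B) → (g',B')` iff `g ∈ B'`, or `g = g'` and `B ≠ B'`.  This directed graph is
a DSRG with parameters `(ns, ls + s − 1, ld + s − 1, ld + s − 2, (l+1)d)`. -/
theorem constructionII_D2_dsrg
    {α : Type} [Fintype α] [DecidableEq α]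
    (n d l s : ℕ) (hn : 0 < n) (hd : 0 < d) (hl : 0 < l) (hs : 0 < s)
    (hdn : d * (n - 1) = l * s)
    (hcard : Fintype.card α = n)
    (𝓑 : α → Finset (Finset α))
    (hBs : ∀ i : α, (𝓑 i).card = s)
    (hBl : ∀ i : α, ∀ B ∈ 𝓑 i, i ∉ B ∧ B.card = l)
    (hBreg : ∀ i x : α, x ≠ i → ((𝓑 i).filter (fun B => x ∈ B)).card = d) :
    IsDSRG (V := {x : α × Finset α // x.2 ∈ 𝓑 x.1})
      (fun x y => x.1.1 ∈ y.1.2 ∨ (x.1.1 = y.1.1 ∧ x.1.2 ≠ y.1.2))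
      (n * s) (l * s + s - 1) (l * d + s - 1) (l * d + s - 2) ((l + 1) * d) := by
  have hmem : ∀ i, ∀ B ∈ 𝓑 i, i ∉ B := fun i B hB => (hBl i B hB).1
  have hB : ∀ i, ∀ B ∈ 𝓑 i, #B = l := fun i B hB => (hBl i B hB).2
  have hne : ∀ i, ∀ B ∈ 𝓑 i, #{C ∈ 𝓑 i | C ≠ B} = s - 1 := fun i B hB => by
    rw [filter_ne', card_erase_of_mem hB, hBs]
  refine ⟨inferInstance, ?_, ?_, ?_, ?_, ?_, ?_, ?_⟩
  · rintro ⟨⟨g, B⟩, hgB⟩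
    simpa using hmem g B hgB
  · have h := natCard_flag_subtype 𝓑 (fun _ _ => True)
    rw [Nat.card_congr (Equiv.subtypeUnivEquiv fun _ => trivial)] at h
    rw [h]
    simp [hBs, hcard]
  · rintro ⟨⟨g, B⟩, hgB⟩
    have key : ∀ h, #{C ∈ 𝓑 h | g ∈ C ∨ (g = h ∧ B ≠ C)} + (if h = g then d + 1 else 0) =
        d + if h = g then s else 0 := by
      intro h
      by_cases hh : h = g
      · subst hh
        have : {C ∈ 𝓑 h | h ∈ C ∨ (h = h ∧ B ≠ C)} = {C ∈ 𝓑 h | C ≠ B} :=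
          filter_congr fun C hC => by grind
        rw [this, hne h B hgB]
        simp
        omega
      · have : {C ∈ 𝓑 h | g ∈ C ∨ (g = h ∧ B ≠ C)} = {C ∈ 𝓑 h | g ∈ C} :=
          filter_congr fun C hC => by grind
        rw [this, hBreg h g (Ne.symm hh)]
        simp [hh]
    have hsum := Fintype.sum_congr _ _ key
    simp only [sum_add_distrib, sum_ite_eq', mem_univ, if_true, sum_const, card_univ, hcard,
      smul_eq_mul] at hsum
    refine (natCard_flag_subtype 𝓑 fun h C => g ∈ C ∨ (g = h ∧ B ≠ C)).trans ?_
    obtain ⟨m, rfl⟩ : ∃ m, n = m + 1 := ⟨n - 1, by omega⟩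
    simp only [Nat.add_sub_cancel] at hdn
    have : (m + 1) * d = l * s + d := by rw [← hdn]; ring
    omega
  · rintro ⟨⟨g, B⟩, hgB⟩
    have key : ∀ h, #{C ∈ 𝓑 h | h ∈ B ∨ (h = g ∧ C ≠ B)} =
        (if h ∈ B then s else 0) + if h = g then s - 1 else 0 := by
      intro h
      by_cases hh : h = g
      · subst hh
        simp [hmem h B hgB, hne h B hgB]
      · by_cases hhB : h ∈ B <;> simp [hh, hhB, hBs]
    refine (natCard_flag_subtype 𝓑 fun h C => h ∈ B ∨ (h = g ∧ C ≠ B)).trans ?_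
    rw [Fintype.sum_congr _ _ key]
    simp [sum_add_distrib, hB g B hgB]
    omega
  · rintro ⟨⟨g, B⟩, hgB⟩
    have key : ∀ h, #{C ∈ 𝓑 h | (g ∈ C ∨ (g = h ∧ B ≠ C)) ∧ (h ∈ B ∨ (h = g ∧ C ≠ B))} =
        (if h ∈ B then d else 0) + if h = g then s - 1 else 0 := by
      intro h
      by_cases hh : h = g
      · subst hh
        have : {C ∈ 𝓑 h | (h ∈ C ∨ (h = h ∧ B ≠ C)) ∧ (h ∈ B ∨ (h = h ∧ C ≠ B))} =
            {C ∈ 𝓑 h | C ≠ B} := filter_congr fun C hC => by grind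
        rw [this, hne h B hgB]
        simp [hmem h B hgB]
      · have := hBreg h g (Ne.symm hh)
        by_cases hhB : h ∈ B <;> simp [hh, Ne.symm hh, hhB, this]
    refine (natCard_flag_subtype 𝓑 fun h C =>
      (g ∈ C ∨ (g = h ∧ B ≠ C)) ∧ (h ∈ B ∨ (h = g ∧ C ≠ B))).trans ?_
    rw [Fintype.sum_congr _ _ key]
    simp [sum_add_distrib, hB g B hgB]
    omega
  · rintro ⟨⟨g, B⟩, hgB⟩ ⟨⟨g', B'⟩, hgB'⟩ - hadj
    dsimp only at hgB hgB' hadj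
    refine (natCard_flag_subtype 𝓑 fun h C =>
      (g ∈ C ∨ (g = h ∧ B ≠ C)) ∧ (h ∈ B' ∨ (h = g' ∧ C ≠ B'))).trans ?_
    rcases hadj with hg | ⟨rfl, hBB⟩
    · have hgg : g ≠ g' := by rintro rfl; exact hmem _ _ hgB' hg
      have key : ∀ h, #{C ∈ 𝓑 h | (g ∈ C ∨ (g = h ∧ B ≠ C)) ∧ (h ∈ B' ∨ (h = g' ∧ C ≠ B'))} +
          (if h = g then d else 0) = (if h ∈ B' then d else 0) + (if h = g then s - 1 else 0) +
            if h = g' then d - 1 else 0 := by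
        intro h
        by_cases hh : h = g
        · subst hh
          have : {C ∈ 𝓑 h | (h ∈ C ∨ (h = h ∧ B ≠ C)) ∧ (h ∈ B' ∨ (h = g' ∧ C ≠ B'))} =
              {C ∈ 𝓑 h | C ≠ B} := filter_congr fun C hC => by grind
          rw [this, hne h B hgB]
          simp [hg, hgg]
          omega
        · by_cases hh' : h = g'
          · subst hh'
            have : {C ∈ 𝓑 h | (g ∈ C ∨ (g = h ∧ B ≠ C)) ∧ (h ∈ B' ∨ (h = h ∧ C ≠ B'))} =
                {C ∈ 𝓑 h | g ∈ C}.erase B' := by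
              ext C
              have := hmem h B' hgB'
              grind
            rw [this, card_erase_of_mem (mem_filter.2 ⟨hgB', hg⟩), hBreg h g hgg]
            simp [hh, hmem h B' hgB']
          · have := hBreg h g (Ne.symm hh)
            by_cases hhB : h ∈ B' <;> simp [hh, Ne.symm hh, hh', hhB, this]
      have hsum := Fintype.sum_congr _ _ key
      simp only [sum_add_distrib, sum_ite_eq', mem_univ, if_true, sum_ite_mem, univ_inter,
        sum_const, hB g' B' hgB', smul_eq_mul] at hsum
      omega
    · have key : ∀ h, #{C ∈ 𝓑 h | (g ∈ C ∨ (g = h ∧ B ≠ C)) ∧ (h ∈ B' ∨ (h = g ∧ C ≠ B'))} =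
          (if h ∈ B' then d else 0) + if h = g then s - 2 else 0 := by
        intro h
        by_cases hh : h = g
        · subst hh
          have : {C ∈ 𝓑 h | (h ∈ C ∨ (h = h ∧ B ≠ C)) ∧ (h ∈ B' ∨ (h = h ∧ C ≠ B'))} =
              ((𝓑 h).erase B).erase B' := by
            ext C
            have := hmem h B' hgB'
            grind
          rw [this, card_erase_of_mem (mem_erase.2 ⟨Ne.symm hBB, hgB'⟩),
            card_erase_of_mem hgB, hBs]
          simp [hmem h B' hgB']
          omega
        · have := hBreg h g (Ne.symm hh)
          by_cases hhB : h ∈ B' <;> simp [hh, Ne.symm hh, hhB, this]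
      have hs2 : 2 ≤ s := by
        rw [← hBs g, ← card_pair hBB]
        exact card_le_card (by grind)
      rw [Fintype.sum_congr _ _ key]
      simp [sum_add_distrib, hB g B' hgB']
      omega
  · rintro ⟨⟨g, B⟩, hgB⟩ ⟨⟨g', B'⟩, hgB'⟩ hxy hadj
    have hg : g ∉ B' := fun h => hadj (Or.inl h)
    have hgg : g ≠ g' := by
      rintro rfl
      exact hadj (Or.inr ⟨rfl, fun h => hxy (Subtype.ext (Prod.ext rfl h))⟩)
    have key : ∀ h, #{C ∈ 𝓑 h | (g ∈ C ∨ (g = h ∧ B ≠ C)) ∧ (h ∈ B' ∨ (h = g' ∧ C ≠ B'))} =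
        (if h ∈ B' then d else 0) + if h = g' then d else 0 := by
      intro h
      by_cases hh : h = g
      · subst hh
        simp [hg, hgg]
      · have hd' := hBreg h g (Ne.symm hh)
        by_cases hh' : h = g'
        · subst hh'
          have : {C ∈ 𝓑 h | (g ∈ C ∨ (g = h ∧ B ≠ C)) ∧ (h ∈ B' ∨ (h = h ∧ C ≠ B'))} =
              {C ∈ 𝓑 h | g ∈ C} := filter_congr fun C hC => by grind
          rw [this, hd']
          simp [hmem h B' hgB']
        · by_cases hhB : h ∈ B' <;> simp [Ne.symm hh, hh', hhB, hd']
    refine (natCard_flag_subtype 𝓑 fun h C =>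
      (g ∈ C ∨ (g = h ∧ B ≠ C)) ∧ (h ∈ B' ∨ (h = g' ∧ C ≠ B'))).trans ?_
    rw [Fintype.sum_congr _ _ key]
    simp [sum_add_distrib, hB g' B' hgB', add_mul]
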